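/- Let (T,f) be a Hubbard tree and let {z₁, z₂, …, z_n = z₀} be a periodic orbit of f that contains no endpoint of T. If the critical orbit is preperiodic, assume in addition that the itineraries of all points z_k differ from the itineraries of all endpoints of T. Then there exist a unique point z of the orbit and two different connected components of T \ {z} such that the critical value c₁ lies in one component and c₀ together with all other points of the orbit lie in the other component. -/

import Mathlib

/- Common definitions for formalizing "Admissibility of kneading sequences and
structure of Hubbard trees for quadratic polynomials" by Bruin–Schleicher. -/

namespace HubbardTrees

/-- The symbols `0`, `1`, `*` used for itineraries and kneading sequences. -/
inductive Sym : Type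
  | zero : Sym
  | one : Sym
  | star : Sym
deriving DecidableEq

/-- `A` is an arc in `X` joining `x` and `y` (a point if `x = y`, otherwise a
homeomorphic image of `[0,1]` with endpoints `x` and `y`). -/
def IsArcBetween {X : Type*} [TopologicalSpace X] (A : Set X) (x y : X) : Prop :=
  (x = y ∧ A = {x}) ∨
  (x ≠ y ∧ ∃ γ : Path x y, Topology.IsEmbedding ⇑γ ∧ Set.range ⇑γ = A)

/-- The global arms at `x`: the connected components of `X \ {x}`. -/
def arms {X : Type*} [TopologicalSpace X] (x : X) : Set (Set X) :=
  {C | ∃ y, y ≠ x ∧ C = connectedComponentIn {x}ᶜ y}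

/-- The global arm at `x` containing `y` (for `y ≠ x`): the component of `X \ {x}`
containing `y`.  Local arms at `x` being germs of global arms, we represent the local
arm at `x` pointing towards `y` by this set. -/
def armTo {X : Type*} [TopologicalSpace X] (x y : X) : Set X :=
  connectedComponentIn {x}ᶜ y

/-- `x` is an endpoint: it has exactly one arm. -/
def IsEndpoint {X : Type*} [TopologicalSpace X] (x : X) : Prop :=
  (arms x).ncard = 1

/-- `x` is a branch point: it has at least three arms. -/
def IsBranchPt {X : Type*} [TopologicalSpace X] (x : X) : Prop :=
  3 ≤ (arms x).ncard

/-- `f` maps the set `A` homeomorphically onto its image. -/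
def MapsHomeoOn {X : Type*} [TopologicalSpace X] (f : X → X) (A : Set X) : Prop :=
  Topology.IsEmbedding (A.restrict f)

/-- `f` is a local homeomorphism onto its image at `x`. -/
def IsLocalHomeoAt {X : Type*} [TopologicalSpace X] (f : X → X) (x : X) : Prop :=
  ∃ U : Set X, IsOpen U ∧ x ∈ U ∧ Topology.IsEmbedding (U.restrict f)

/-- `g` sends the local arm at `x` represented by the global arm `C` to the local
arm at `g x` represented by `C'` (germ condition: some initial piece of `C` at `x`
is mapped into `C'`). -/
def MapsLocalArm {X : Type*} [TopologicalSpace X] (g : X → X) (x : X) (C C' : Set X) : Prop :=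
  C ∈ arms x ∧ C' ∈ arms (g x) ∧ ∃ U ∈ nhds x, g '' (C ∩ U) ⊆ C'

/-- `z` is periodic under `f` with exact period `n`. -/
def ExactPeriod {Y : Type*} (f : Y → Y) (z : Y) (n : ℕ) : Prop :=
  1 ≤ n ∧ f^[n] z = z ∧ ∀ k, 1 ≤ k → k < n → f^[k] z ≠ z

/-- The first return map `f^[n]` of the fixed point `z` of `f^[n]` permutes all the
local arms at `z` transitively in a single cycle. -/
def ArmsTransitive {X : Type*} [TopologicalSpace X] (f : X → X) (n : ℕ) (z : X) : Prop :=
  ∀ C ∈ arms z, ∀ C' ∈ arms z, ∃ j : ℕ, MapsLocalArm (f^[n * j]) z C C'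

/-- An (abstract) Hubbard tree: a finite topological tree `X` together with a
continuous surjection `f` and a critical point `c0`, subject to the axioms of
Bruin–Schleicher. -/
structure HubbardTree (X : Type*) [TopologicalSpace X] : Type _ where
  /-- the dynamics -/
  f : X → X
  /-- the critical point -/
  c0 : X
  compact : CompactSpace X
  t2 : T2Space X
  conn : ConnectedSpace X
  /-- the unique arc `[x,y]` joining two points -/
  arc : X → X → Set X
  arc_isArc : ∀ x y : X, IsArcBetween (arc x y) x y
  arc_unique : ∀ (x y : X) (A : Set X), IsArcBetween A x y → A = arc x y
  -- finiteness of the tree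
  arms_finite : ∀ x : X, (arms x).Finite
  branch_finite : Set.Finite {x : X | IsBranchPt x}
  endpoint_finite : Set.Finite {x : X | IsEndpoint x}
  cont : Continuous f
  surj : Function.Surjective f
  /-- every point has at most two inverse images -/
  two_preimages : ∀ y : X, ∃ a b : X, f ⁻¹' {y} ⊆ {a, b}
  /-- local homeomorphism onto its image away from the critical point -/
  local_homeo : ∀ x : X, x ≠ c0 → IsLocalHomeoAt f x
  /-- all endpoints lie on the critical orbit -/
  endpoints_on_orbit : ∀ x : X, IsEndpoint x → ∃ k : ℕ, f^[k] c0 = x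
  /-- the critical point is periodic or preperiodic -/
  crit_preperiodic : ∃ k n : ℕ, 1 ≤ n ∧ f^[k + n] c0 = f^[k] c0
  /-- the critical point is not fixed -/
  crit_not_fixed : f c0 ≠ c0
  /-- expansivity -/
  expansive : ∀ x y : X, x ≠ y →
    (IsBranchPt x ∨ ∃ k : ℕ, f^[k] c0 = x) →
    (IsBranchPt y ∨ ∃ k : ℕ, f^[k] c0 = y) →
    ∃ n : ℕ, c0 ∈ f^[n] '' (arc x y)

namespace HubbardTree

variable {X : Type*} [TopologicalSpace X] (H : HubbardTree X)

/-- The critical value `c₁ = f(c₀)`. -/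
def c1 : X := H.f H.c0

/-- The component `T₁` of `T \ {c₀}` containing the critical value. -/
def T1 : Set X := connectedComponentIn {H.c0}ᶜ H.c1

open Classical in
/-- The symbol (`0`, `1` or `*`) attached to a point of the tree. -/
noncomputable def symOf (x : X) : Sym :=
  if x = H.c0 then Sym.star else if x ∈ H.T1 then Sym.one else Sym.zero

/-- The itinerary of `x`: a sequence of symbols, 1-indexed (the value at index `0`
is irrelevant); entry `k ≥ 1` is the symbol of `f^[k-1] x`. -/
noncomputable def itin (x : X) : ℕ → Sym :=
  fun k => H.symOf (H.f^[k - 1] x)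

/-- The kneading sequence: the itinerary of the critical value (1-indexed). -/
noncomputable def kneading : ℕ → Sym := H.itin H.c1

/-- `z` is the characteristic point of its periodic orbit: `c₁` lies in one
component of `X \ {z}` while `c₀` and all other points of the orbit lie in a
different component. -/
def IsCharacteristic (z : X) : Prop :=
  ∃ Cv Cz : Set X, Cv ∈ arms z ∧ Cz ∈ arms z ∧ Cv ≠ Cz ∧
    H.c1 ∈ Cv ∧ H.c0 ∈ Cz ∧ ∀ k : ℕ, H.f^[k] z ≠ z → H.f^[k] z ∈ Cz

/-- The first return map fixes the local arm at `z` pointing to the critical point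
and permutes all other local arms transitively in a single cycle. -/
def OtherArmsTransitive (n : ℕ) (z : X) : Prop :=
  ∀ C ∈ arms z, C ≠ armTo z H.c0 → ∀ C' ∈ arms z, C' ≠ armTo z H.c0 →
    ∃ j : ℕ, MapsLocalArm (H.f^[n * j]) z C C'

/-- `z` is the characteristic point of an evil periodic orbit of branch points of
exact period `n`. -/
def IsEvilOrbit (z : X) (n : ℕ) : Prop :=
  ExactPeriod H.f z n ∧ (∀ k : ℕ, IsBranchPt (H.f^[k] z)) ∧
    H.IsCharacteristic z ∧ ¬ ArmsTransitive H.f n z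

/-- `x` is precritical with `Step(x) = k`: `k ≥ 1` is minimal with `f^[k] x = c₁`. -/
def Step (x : X) (k : ℕ) : Prop :=
  1 ≤ k ∧ H.f^[k] x = H.c1 ∧ ∀ j, 1 ≤ j → j < k → H.f^[j] x ≠ H.c1

/-- `x` is the closest precritical point `ζ_k`. -/
def IsClosestPrecritical (x : X) (k : ℕ) : Prop :=
  H.Step x k ∧ ∀ j, 1 ≤ j → j < k → H.c1 ∉ H.f^[j] '' (H.arc H.c1 x)

/-- `x` is the earliest precritical point on the set `A`, with `Step(x) = k`:
it is a precritical point on `A` of minimal Step. -/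
def IsEarliestPrecriticalOn (A : Set X) (x : X) (k : ℕ) : Prop :=
  x ∈ A ∧ H.Step x k ∧ ∀ y ∈ A, ∀ j : ℕ, H.Step y j → k ≤ j

/-- Marked points: branch points and points of the critical orbit. -/
def MarkedPt (x : X) : Prop :=
  IsBranchPt x ∨ ∃ k : ℕ, H.f^[k] H.c0 = x

/-- Two marked points are joined by an edge if the arc between them contains no
further marked point. -/
def IsEdge (x y : X) : Prop :=
  H.MarkedPt x ∧ H.MarkedPt y ∧ x ≠ y ∧
    ∀ w ∈ H.arc x y, H.MarkedPt w → w = x ∨ w = y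

/-- Equivalence of Hubbard trees: a bijection between the marked points which
conjugates the dynamics and preserves edges. -/
def Equivalent {Y : Type*} [TopologicalSpace Y] (H' : HubbardTree Y) : Prop :=
  ∃ φ : X → Y,
    (∀ x : X, H.MarkedPt x → H'.MarkedPt (φ x)) ∧
    (∀ x x' : X, H.MarkedPt x → H.MarkedPt x' → φ x = φ x' → x = x') ∧
    (∀ y : Y, H'.MarkedPt y → ∃ x : X, H.MarkedPt x ∧ φ x = y) ∧
    φ H.c0 = H'.c0 ∧
    (∀ x : X, H.MarkedPt x → φ (H.f x) = H'.f (φ x)) ∧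
    (∀ x x' : X, H.MarkedPt x → H.MarkedPt x' →
      (H.IsEdge x x' ↔ H'.IsEdge (φ x) (φ x')))

end HubbardTree

/-! ### Combinatorics of kneading sequences -/

/-- The function `ρ_ν(n) = inf { k > n : ν_k ≠ ν_{k-n} } ∈ ℕ ∪ {∞}` (sequences are
1-indexed). -/
noncomputable def rho (ν : ℕ → Sym) (n : ℕ) : ℕ∞ :=
  sInf {e : ℕ∞ | ∃ j : ℕ, e = (j : ℕ∞) ∧ n < j ∧ ν j ≠ ν (j - n)}

/-- `RhoOrbit ν k m` means that `m` belongs to the `ρ`-orbit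
`k → ρ(k) → ρ(ρ(k)) → ⋯` of `k` (stopped before reaching `∞`). -/
inductive RhoOrbit (ν : ℕ → Sym) : ℕ → ℕ → Prop
  | refl (k : ℕ) : RhoOrbit ν k k
  | step {k m j : ℕ} : RhoOrbit ν k m → rho ν m = (j : ℕ∞) → RhoOrbit ν k j

/-- `m` occurs in the internal address `1 → ρ(1) → ρ(ρ(1)) → ⋯` of `ν`. -/
def InternalAddress (ν : ℕ → Sym) (m : ℕ) : Prop := RhoOrbit ν 1 m

/-- `ν` is a `*`-periodic kneading sequence of (exact) period `n`:
`ν = overline(1 ν₂ … ν_{n-1} *)`. -/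
def StarPeriodic (ν : ℕ → Sym) (n : ℕ) : Prop :=
  2 ≤ n ∧ ν 1 = Sym.one ∧ ν n = Sym.star ∧
    (∀ k, 1 ≤ k → ν (k + n) = ν k) ∧
    (∀ k, 1 ≤ k → k < n → ν k ≠ Sym.star)

/-- `ν` fails the admissibility condition for period `m`. -/
def FailsAdmissibility (ν : ℕ → Sym) (m : ℕ) : Prop :=
  1 ≤ m ∧
  ¬ InternalAddress ν m ∧
  (∀ k : ℕ, k ∣ m → 1 ≤ k → k < m → rho ν k ≤ (m : ℕ∞)) ∧
  ∃ R r : ℕ, rho ν m = (R : ℕ∞) ∧ 1 ≤ r ∧ r ≤ m ∧ r ≡ R [MOD m] ∧ RhoOrbit ν r m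

open Classical in
/-- The number `q(m)` of arms predicted by the kneading sequence, where
`ρ(m) = R < ∞` and `r ∈ {1,…,m}` is congruent to `R` modulo `m`. -/
noncomputable def qArms (ν : ℕ → Sym) (m R r : ℕ) : ℕ :=
  if RhoOrbit ν r m then (R - r) / m + 1 else (R - r) / m + 2


/-! ### Embeddings into the plane and cyclic order of arms -/

/-- Three points in the plane are in (strictly) counterclockwise position. -/
def Ccw (p q r : ℝ × ℝ) : Prop :=
  0 < (q.1 - p.1) * (r.2 - p.2) - (q.2 - p.2) * (r.1 - p.1)

namespace HubbardTree

variable {X : Type*} [TopologicalSpace X] (H : HubbardTree X)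

/-- Under an embedding `φ` of the tree into the plane, `p` is a first exit point of
the arm `C` at `x` through the circle of radius `ε` around `φ x`: `p = φ y` for a
point `y ∈ C` at distance exactly `ε`, such that the arc from `x` to `y` stays
within distance `< ε` before reaching `y`. -/
def ExitPt (φ : X → ℝ × ℝ) (x : X) (C : Set X) (ε : ℝ) (p : ℝ × ℝ) : Prop :=
  ∃ y ∈ C, φ y = p ∧ dist (φ x) p = ε ∧
    ∀ z ∈ H.arc x y, z ≠ y → dist (φ x) (φ z) < ε

/-- The local arms at `x` represented by the arms `C, C', C''` are in
counterclockwise cyclic order under the embedding `φ`. -/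
def ArmsCcw (φ : X → ℝ × ℝ) (x : X) (C C' C'' : Set X) : Prop :=
  ∃ ε₀ : ℝ, 0 < ε₀ ∧ ∀ ε : ℝ, 0 < ε → ε < ε₀ →
    ∀ p p' p'' : ℝ × ℝ, H.ExitPt φ x C ε p → H.ExitPt φ x C' ε p' →
      H.ExitPt φ x C'' ε p'' → Ccw p p' p''

/-- `f` respects the cyclic order (induced by the embedding `φ`) of the local arms
at all branch points. -/
def RespectsCyclicOrder (φ : X → ℝ × ℝ) : Prop :=
  ∀ x : X, IsBranchPt x →
    ∀ C C' C'' : Set X, C ∈ arms x → C' ∈ arms x → C'' ∈ arms x →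
      C ≠ C' → C' ≠ C'' → C ≠ C'' → H.ArmsCcw φ x C C' C'' →
      ∀ D D' D'' : Set X, MapsLocalArm H.f x C D → MapsLocalArm H.f x C' D' →
        MapsLocalArm H.f x C'' D'' → H.ArmsCcw φ (H.f x) D D' D''

/-- The Hubbard tree can be topologically embedded into the plane `ℝ²` so that `f`
respects the cyclic order of the local arms at all branch points. -/
def PlanarEmbeddable : Prop :=
  ∃ φ : X → ℝ × ℝ, Topology.IsEmbedding φ ∧ H.RespectsCyclicOrder φ

end HubbardTree


/-!
Write `[x, y]` for the arc from `x` to `y`, and let the shadow of `z` (as seen from the critical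
point `c₀`) be the set of points that `z` separates from `c₀`. Every point lies on an arc from a
given root to an endpoint, so the tree is a finite union of arcs; hence `x` is in the shadow of `z`
exactly when `z ∈ [c₀, x]` and `x ≠ z`.

A locally injective path in a uniquely arcwise connected space is injective, because its shortest
loop would be a simple closed curve; so `f` maps `[c₀, x]` homeomorphically onto `[c₁, f x]`.
Therefore `f` maps the shadow of `z` into the shadow of `f z` unless `c₁` is in the shadow of `f z`.

If `c₁` were in no shadow of an orbit point, an endpoint in the shadow of `z` would stay forever in
the shadows of the iterates of `z`, on the same side of `c₀` as the orbit of `z`; the hypotheses on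
endpoints exclude this. The shadows containing `c₁` are nested; let `w` be the orbit point with the
smallest one. If `f^k w` were in the shadow of `w`, let `v = f^j w` with `j ≤ k` be the last of
these iterates with `c₁` in its shadow. Then `f^(k-j)` maps the shadow of `v` into itself and `v`
into its own shadow, contradicting periodicity of `v`.
-/

open Set Function Topology

section Arms

variable {X : Type*} [TopologicalSpace X] {b x y z : X} {C s : Set X}

theorem notMem_armTo (z y : X) : z ∉ armTo z y :=
  fun h => connectedComponentIn_subset _ _ h rfl

theorem mem_armTo_self (h : y ≠ z) : y ∈ armTo z y :=
  mem_connectedComponentIn h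

theorem isPreconnected_armTo (z y : X) : IsPreconnected (armTo z y) :=
  isPreconnected_connectedComponentIn

theorem armTo_eq_armTo (h : y ∈ armTo z x) : armTo z x = armTo z y :=
  connectedComponentIn_eq h

theorem mem_armTo_comm : y ∈ armTo z x ↔ x ∈ armTo z y := by
  suffices symm : ∀ {x y : X}, y ∈ armTo z x → x ∈ armTo z y from ⟨symm, symm⟩
  intro x y h
  rw [← armTo_eq_armTo h]
  exact mem_armTo_self (connectedComponentIn_nonempty_iff.1 ⟨y, h⟩)

theorem subset_armTo_of_isPreconnected (hs : IsPreconnected s) (hx : x ∈ s) (hz : z ∉ s) :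
    s ⊆ armTo z x :=
  hs.subset_connectedComponentIn hx (subset_compl_singleton_iff.2 hz)

theorem armTo_mem_arms (h : y ≠ z) : armTo z y ∈ arms z :=
  ⟨y, h, rfl⟩

theorem eq_armTo_of_mem_arms (hC : C ∈ arms z) (hy : y ∈ C) : C = armTo z y := by
  obtain ⟨x, -, rfl⟩ := hC
  exact armTo_eq_armTo hy

theorem isClosed_insert_armTo [T1Space X] (h : y ≠ z) : IsClosed (insert z (armTo z y)) := by
  have closure_subset : closure (armTo z y) ⊆ insert z (armTo z y) := by
    intro w hw
    refine or_iff_not_imp_left.2 fun hwz => ?_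
    have preconnected : IsPreconnected (insert w (armTo z y)) :=
      (isPreconnected_armTo z y).subset_closure (subset_insert _ _)
        (insert_subset hw subset_closure)
    refine subset_armTo_of_isPreconnected preconnected (Or.inr (mem_armTo_self h)) ?_
      (mem_insert _ _)
    rintro (hzw | hz)
    exacts [hwz hzw.symm, notMem_armTo _ _ hz]
  refine isClosed_of_closure_subset ?_
  rw [insert_eq, closure_union, closure_singleton]
  exact union_subset (singleton_subset_iff.2 (mem_insert _ _)) closure_subset

theorem isOpen_armTo [T1Space X] (hz : (arms z).Finite) (y : X) : IsOpen (armTo z y) := by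
  have compl_eq : (armTo z y)ᶜ = {z} ∪ ⋃ D ∈ arms z \ {armTo z y}, insert z D := by
    ext w
    simp only [mem_compl_iff, mem_union, mem_singleton_iff, mem_iUnion]
    constructor
    · refine fun hw => or_iff_not_imp_left.2 fun hwz => ?_
      exact ⟨armTo z w, ⟨armTo_mem_arms hwz, fun heq => hw (heq ▸ mem_armTo_self hwz)⟩,
        Or.inr (mem_armTo_self hwz)⟩
    · rintro (rfl | ⟨D, ⟨hD, hne⟩, rfl | hwD⟩) hw
      · exact notMem_armTo _ _ hw
      · exact notMem_armTo _ _ hw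
      · exact hne ((eq_armTo_of_mem_arms hD hwD).trans (armTo_eq_armTo hw).symm)
  rw [← isClosed_compl_iff, compl_eq]
  refine isClosed_singleton.union ((hz.subset sdiff_subset).isClosed_biUnion ?_)
  rintro D ⟨⟨x, hx, rfl⟩, -⟩
  exact isClosed_insert_armTo hx

/-- The shadow of `z` as seen from `b`: the points other than `z` that `z` separates from `b`. -/
def shadow (b z : X) : Set X := {x | x ≠ z ∧ x ∉ armTo z b}

theorem notMem_shadow_self (b z : X) : z ∉ shadow b z :=
  fun h => h.1 rfl

theorem base_notMem_shadow (b z : X) : b ∉ shadow b z :=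
  fun h => h.2 (mem_armTo_self h.1)

theorem shadow_eq_shadow (h : x ∈ armTo z b) : shadow b z = shadow x z := by
  simp only [shadow, armTo_eq_armTo h]

theorem shadow_nonempty (hb : b ≠ z) (hz : ¬ IsEndpoint z) : (shadow b z).Nonempty := by
  contrapose! hz
  refine ncard_eq_one.2 ⟨armTo z b, (subset_singleton_iff.2 ?_).antisymm
    (singleton_subset_iff.2 (armTo_mem_arms hb))⟩
  rintro _ ⟨y, hy, rfl⟩
  have mem_arm : y ∈ armTo z b := by
    by_contra hyb
    exact (hz ▸ (⟨hy, hyb⟩ : y ∈ shadow b z) : y ∈ (∅ : Set X))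
  exact (armTo_eq_armTo mem_arm).symm

end Arms

section Arcs

variable {X : Type*} [TopologicalSpace X] {x y : X} {A : Set X}

theorem IsArcBetween.symm (h : IsArcBetween A x y) : IsArcBetween A y x := by
  rcases h with ⟨rfl, rfl⟩ | ⟨hne, γ, hγ, rfl⟩
  · exact Or.inl ⟨rfl, rfl⟩
  · exact Or.inr ⟨hne.symm, γ.symm, hγ.comp unitInterval.symmHomeomorph.isEmbedding, γ.symm_range⟩

theorem IsArcBetween.exists_parametrization (h : IsArcBetween A x y) :
    ∃ (g : ℝ → X) (b : ℝ), 0 ≤ b ∧ Continuous g ∧ InjOn g (Icc 0 b) ∧ g 0 = x ∧ g b = y ∧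
      g '' Icc 0 b = A := by
  rcases h with ⟨rfl, rfl⟩ | ⟨-, γ, hγ, rfl⟩
  · exact ⟨fun _ => x, 0, le_rfl, continuous_const, by simp, rfl, rfl, by simp⟩
  · refine ⟨γ.extend, 1, zero_le_one, γ.continuous_extend, ?_, γ.extend_zero, γ.extend_one, ?_⟩
    · intro s hs t ht hst
      rw [γ.extend_apply hs, γ.extend_apply ht] at hst
      exact congrArg Subtype.val (hγ.injective hst)
    · ext w
      constructor
      · rintro ⟨t, ht, rfl⟩
        exact ⟨⟨t, ht⟩, (γ.extend_apply ht).symm⟩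
      · rintro ⟨t, rfl⟩
        exact ⟨t, t.2, γ.extend_apply t.2⟩

theorem isArcBetween_image_Icc [T2Space X] {g : ℝ → X} {a b : ℝ} (hab : a ≤ b)
    (hg : ContinuousOn g (Icc a b)) (hinj : InjOn g (Icc a b)) :
    IsArcBetween (g '' Icc a b) (g a) (g b) := by
  rcases hab.eq_or_lt with rfl | hlt
  · exact Or.inl ⟨rfl, by simp⟩
  have hne : g a ≠ g b := fun h => hlt.ne (hinj (left_mem_Icc.2 hab) (right_mem_Icc.2 hab) h)
  let γ : Path (g a) (g b) :=
    { toFun := (Icc a b).domRestrict g ∘ (iccHomeoI a b hlt).symm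
      continuous_toFun := hg.domRestrict.comp (iccHomeoI a b hlt).symm.continuous
      source' := congrArg g (by simp [iccHomeoI_symm_apply_coe])
      target' := congrArg g (by simp [iccHomeoI_symm_apply_coe]) }
  have γ_injective : Injective γ := hinj.injective.comp (iccHomeoI a b hlt).symm.injective
  have range_γ : range γ = g '' Icc a b :=
    ((iccHomeoI a b hlt).symm.surjective.range_comp _).trans (range_domRestrict g _)
  exact Or.inr ⟨hne, γ, (γ.continuous.isClosedEmbedding γ_injective).isEmbedding, range_γ⟩

end Arcs

/-- Any two points are joined by exactly one arc. -/
class UniquelyArcConnected (X : Type*) [TopologicalSpace X] : Prop where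
  existsUnique_isArcBetween : ∀ x y : X, ∃! A : Set X, IsArcBetween A x y

section UniqueArcs

variable {X : Type*} [TopologicalSpace X] [UniquelyArcConnected X] {b w w' x y z : X}

/-- The arc `[x, y]` of a uniquely arcwise connected space. -/
noncomputable def arcBetween (x y : X) : Set X :=
  (UniquelyArcConnected.existsUnique_isArcBetween x y).choose

theorem isArcBetween_arcBetween (x y : X) : IsArcBetween (arcBetween x y) x y :=
  (UniquelyArcConnected.existsUnique_isArcBetween x y).choose_spec.1

theorem IsArcBetween.eq_arcBetween {A : Set X} (h : IsArcBetween A x y) : A = arcBetween x y :=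
  (UniquelyArcConnected.existsUnique_isArcBetween x y).choose_spec.2 A h

theorem arcBetween_self (x : X) : arcBetween x x = {x} :=
  (IsArcBetween.eq_arcBetween (Or.inl ⟨rfl, rfl⟩)).symm

theorem arcBetween_comm (x y : X) : arcBetween x y = arcBetween y x :=
  (isArcBetween_arcBetween x y).symm.eq_arcBetween

theorem right_mem_arcBetween (x y : X) : y ∈ arcBetween x y := by
  obtain ⟨g, b, hb, -, -, -, rfl, hA⟩ := (isArcBetween_arcBetween x y).exists_parametrization
  exact hA ▸ mem_image_of_mem g (right_mem_Icc.2 hb)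

theorem left_mem_arcBetween (x y : X) : x ∈ arcBetween x y :=
  arcBetween_comm y x ▸ right_mem_arcBetween y x

theorem isPreconnected_arcBetween (x y : X) : IsPreconnected (arcBetween x y) := by
  obtain ⟨g, b, -, hg, -, -, -, hA⟩ := (isArcBetween_arcBetween x y).exists_parametrization
  exact hA ▸ isPreconnected_Icc.image g hg.continuousOn

theorem isCompact_arcBetween (x y : X) : IsCompact (arcBetween x y) := by
  obtain ⟨g, b, -, hg, -, -, -, hA⟩ := (isArcBetween_arcBetween x y).exists_parametrization
  exact hA ▸ isCompact_Icc.image hg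

theorem mem_arcBetween_of_mem_shadow (h : x ∈ shadow b z) : z ∈ arcBetween b x := by
  by_contra hz
  exact h.2 (subset_armTo_of_isPreconnected (isPreconnected_arcBetween b x)
    (left_mem_arcBetween b x) hz (right_mem_arcBetween b x))

theorem image_Icc_eq_arcBetween [T2Space X] {g : ℝ → X} {a b : ℝ} (hab : a ≤ b)
    (hg : ContinuousOn g (Icc a b)) (hinj : InjOn g (Icc a b)) :
    g '' Icc a b = arcBetween (g a) (g b) :=
  (isArcBetween_image_Icc hab hg hinj).eq_arcBetween

theorem image_arcBetween {Y : Type*} [TopologicalSpace Y] [T2Space Y] [UniquelyArcConnected Y]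
    {f : X → Y} (hf : ContinuousOn f (arcBetween x y)) (hinj : InjOn f (arcBetween x y)) :
    f '' arcBetween x y = arcBetween (f x) (f y) := by
  obtain ⟨g, b, hb, hg, hgi, rfl, rfl, hA⟩ :=
    (isArcBetween_arcBetween x y).exists_parametrization
  rw [← hA] at hf hinj ⊢
  rw [← image_comp]
  exact image_Icc_eq_arcBetween hb (hf.comp hg.continuousOn (mapsTo_image g _))
    (hinj.comp hgi (mapsTo_image g _))

variable [T2Space X]

theorem arcBetween_subset_arcBetween (hw : w ∈ arcBetween x y) :
    arcBetween x w ⊆ arcBetween x y := by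
  obtain ⟨g, b, -, hg, hinj, rfl, rfl, hA⟩ :=
    (isArcBetween_arcBetween x y).exists_parametrization
  rw [← hA] at hw ⊢
  obtain ⟨s, hs, rfl⟩ := hw
  have initial : Icc 0 s ⊆ Icc 0 b := Icc_subset_Icc_right hs.2
  rw [← image_Icc_eq_arcBetween hs.1 hg.continuousOn (hinj.mono initial)]
  exact image_mono initial

theorem mem_arcBetween_total (hw : w ∈ arcBetween x y) (hw' : w' ∈ arcBetween x y) :
    w ∈ arcBetween x w' ∨ w' ∈ arcBetween x w := by
  obtain ⟨g, b, -, hg, hinj, rfl, rfl, hA⟩ :=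
    (isArcBetween_arcBetween x y).exists_parametrization
  rw [← hA] at hw hw'
  obtain ⟨s, hs, rfl⟩ := hw
  obtain ⟨t, ht, rfl⟩ := hw'
  have initial : ∀ r ∈ Icc 0 b, arcBetween (g 0) (g r) = g '' Icc 0 r := fun r hr =>
    (image_Icc_eq_arcBetween hr.1 hg.continuousOn (hinj.mono (Icc_subset_Icc_right hr.2))).symm
  rw [initial s hs, initial t ht]
  exact (le_total s t).imp (fun h => ⟨s, ⟨hs.1, h⟩, rfl⟩) (fun h => ⟨t, ⟨ht.1, h⟩, rfl⟩)

theorem arcBetween_inter_arcBetween_subset (hw : w ∈ arcBetween x y) :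
    arcBetween w x ∩ arcBetween w y ⊆ {w} := by
  obtain ⟨g, b, -, hg, hinj, rfl, rfl, hA⟩ :=
    (isArcBetween_arcBetween x y).exists_parametrization
  rw [← hA] at hw
  obtain ⟨s, hs, rfl⟩ := hw
  rw [arcBetween_comm,
    ← image_Icc_eq_arcBetween hs.1 hg.continuousOn (hinj.mono (Icc_subset_Icc_right hs.2)),
    ← image_Icc_eq_arcBetween hs.2 hg.continuousOn (hinj.mono (Icc_subset_Icc_left hs.1)),
    ← hinj.image_inter (Icc_subset_Icc_right hs.2) (Icc_subset_Icc_left hs.1),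
    Icc_inter_Icc_eq_singleton hs.1 hs.2, image_singleton]

theorem arcBetween_subset_insert_armTo (x y : X) : arcBetween x y ⊆ insert x (armTo x y) := by
  refine fun w hw => or_iff_not_imp_left.2 fun hwx => ?_
  have hx : x ∉ arcBetween w y := fun hx =>
    hwx (arcBetween_inter_arcBetween_subset hw ⟨right_mem_arcBetween w x, hx⟩).symm
  exact subset_armTo_of_isPreconnected (isPreconnected_arcBetween w y) (right_mem_arcBetween w y)
    hx (left_mem_arcBetween w y)

theorem mem_armTo_of_mem_shadow (hz : z ≠ b) (hx : x ∈ shadow b z) : x ∈ armTo b z := by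
  have hb : b ∉ arcBetween z x := fun h =>
    (arcBetween_subset_insert_armTo z x h).elim hz.symm (fun h => hx.2 (mem_armTo_comm.1 h))
  exact subset_armTo_of_isPreconnected (isPreconnected_arcBetween z x) (left_mem_arcBetween z x)
    hb (right_mem_arcBetween z x)

theorem insert_armTo_subset_armTo (h : y ∈ shadow b x) :
    insert x (armTo x b) ⊆ armTo y b := by
  have preconnected : IsPreconnected (arcBetween x b ∪ armTo x b) := by
    rcases eq_or_ne b x with rfl | hb
    · rw [union_eq_left.2 (by simp [armTo, connectedComponentIn_eq_empty])]
      exact isPreconnected_arcBetween b b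
    · exact (isPreconnected_arcBetween x b).union b (right_mem_arcBetween x b)
        (mem_armTo_self hb) (isPreconnected_armTo x b)
  have hy : y ∉ arcBetween x b ∪ armTo x b := by
    rintro (hy | hy)
    · exact (arcBetween_subset_insert_armTo x b hy).elim h.1 h.2
    · exact h.2 hy
  refine Subset.trans ?_ (subset_armTo_of_isPreconnected preconnected
    (Or.inl (right_mem_arcBetween x b)) hy)
  exact insert_subset (Or.inl (left_mem_arcBetween x b)) subset_union_right

theorem armTo_subset_armTo (h : y ∉ armTo x b) : armTo x b ⊆ armTo y b := by
  rcases eq_or_ne y x with rfl | hyx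
  · exact subset_rfl
  · exact (subset_insert _ _).trans (insert_armTo_subset_armTo ⟨hyx, h⟩)

theorem mem_shadow_of_notMem_armTo (hy : y ∈ shadow b x) (hw : w ∉ armTo y b) :
    w ∈ shadow b x :=
  ⟨fun hwx => hw (insert_armTo_subset_armTo hy (Or.inl hwx)),
    fun hwx => hw (insert_armTo_subset_armTo hy (Or.inr hwx))⟩

theorem shadow_subset_shadow (h : y ∈ shadow b x) : shadow b y ⊆ shadow b x :=
  fun _ hw => mem_shadow_of_notMem_armTo h hw.2

end UniqueArcs

section LocallyInjectivePaths

variable {X : Type*} [TopologicalSpace X] [T2Space X] [UniquelyArcConnected X]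
  {g : ℝ → X} {a b : ℝ}

theorem ne_of_injOn_Ioc (hab : a < b) (hg : ContinuousOn g (Icc a b)) (hinj : InjOn g (Ioc a b)) :
    g a ≠ g b := by
  intro hloop
  obtain ⟨m, ham, hmb⟩ := exists_between hab
  have injOn_left : InjOn g (Icc a m) := by
    rw [← Ioc_insert_left ham.le, injOn_insert left_notMem_Ioc]
    refine ⟨hinj.mono (Ioc_subset_Ioc_right hmb.le), ?_⟩
    rintro ⟨t, ht, hta⟩
    have htb : t = b :=
      hinj ⟨ht.1, ht.2.trans hmb.le⟩ (right_mem_Ioc.2 hab) (hta.trans hloop)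
    exact (ht.2.trans_lt hmb).ne htb
  have injOn_right : InjOn g (Icc m b) :=
    hinj.mono ((Icc_subset_Ioc_iff hmb.le).2 ⟨ham, le_rfl⟩)
  have image_eq : g '' Icc a m = g '' Icc m b := by
    rw [image_Icc_eq_arcBetween ham.le (hg.mono (Icc_subset_Icc_right hmb.le)) injOn_left,
      image_Icc_eq_arcBetween hmb.le (hg.mono (Icc_subset_Icc_left ham.le)) injOn_right,
      hloop, arcBetween_comm]
  obtain ⟨s, has, hsm⟩ := exists_between ham
  obtain ⟨t, ht, hts⟩ : g s ∈ g '' Icc m b := by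
    rw [← image_eq]
    exact ⟨s, ⟨has.le, hsm.le⟩, rfl⟩
  have hts' : t = s := hinj ⟨ham.trans_le ht.1, ht.2⟩ ⟨has, (hsm.trans hmb).le⟩ hts
  exact (hsm.trans_le ht.1).ne' hts'

theorem injOn_Icc_of_injOn_Ioc (hab : a ≤ b) (hg : ContinuousOn g (Icc a b))
    (hinj : InjOn g (Ioc a b)) : InjOn g (Icc a b) := by
  rw [← Ioc_insert_left hab, injOn_insert left_notMem_Ioc]
  refine ⟨hinj, ?_⟩
  rintro ⟨t, ht, hta⟩
  exact ne_of_injOn_Ioc ht.1 (hg.mono (Icc_subset_Icc_right ht.2))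
    (hinj.mono (Ioc_subset_Ioc_right ht.2)) hta.symm

theorem exists_pos_ne_of_locally_injOn {Y : Type*} {g : ℝ → Y}
    (hloc : ∀ t ∈ Icc a b, ∃ V ∈ 𝓝[Icc a b] t, InjOn g V) :
    ∃ δ > 0, ∀ s ∈ Icc a b, ∀ t ∈ Icc a b, s < t → t < s + δ → g s ≠ g t := by
  choose! V hV hVinj using hloc
  obtain ⟨δ, hδ, hball⟩ := Metric.uniformity_basis_dist.lebesgue_number_lemma_nhdsWithin'
    isCompact_Icc (fun t (ht : t ∈ Icc a b) => hV t ht)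
  refine ⟨δ, hδ, fun s hs t ht hst hlt hgst => ?_⟩
  obtain ⟨r, hr⟩ := hball s hs
  have hsV : s ∈ V r := hr ⟨by simpa [UniformSpace.ball] using hδ, hs⟩
  have htV : t ∈ V r := by
    refine hr ⟨?_, ht⟩
    change dist s t < δ
    rw [dist_comm, Real.dist_eq, abs_of_pos (sub_pos.2 hst)]
    linarith
  exact hst.ne (hVinj r r.2 hsV htV hgst)

theorem exists_loop_injOn_Ioc {Y : Type*} [TopologicalSpace Y] [T2Space Y] {g : ℝ → Y}
    (hg : ContinuousOn g (Icc a b)) (hloc : ∀ t ∈ Icc a b, ∃ V ∈ 𝓝[Icc a b] t, InjOn g V)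
    (hinj : ¬ InjOn g (Icc a b)) :
    ∃ u ∈ Icc a b, ∃ v ∈ Icc a b, u < v ∧ g u = g v ∧ InjOn g (Ioc u v) := by
  obtain ⟨δ, hδ, no_short_loop⟩ := exists_pos_ne_of_locally_injOn hloc
  let loops : Set (ℝ × ℝ) := {p ∈ Icc a b ×ˢ Icc a b | g p.1 = g p.2} ∩ {p | p.1 + δ ≤ p.2}
  have isClosed_loops : IsClosed loops :=
    ((isClosed_Icc.prod isClosed_Icc).isClosed_eq
      (hg.comp continuousOn_fst fun _ hp => hp.1)
      (hg.comp continuousOn_snd fun _ hp => hp.2)).inter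
      (isClosed_le (by fun_prop) continuous_snd)
  have isCompact_loops : IsCompact loops :=
    (isCompact_Icc.prod isCompact_Icc).of_isClosed_subset isClosed_loops fun p hp => hp.1.1
  have mem_loops : ∀ s ∈ Icc a b, ∀ t ∈ Icc a b, s < t → g s = g t → (s, t) ∈ loops :=
    fun s hs t ht hst hgst =>
      ⟨⟨⟨hs, ht⟩, hgst⟩, not_lt.1 fun hlt => no_short_loop s hs t ht hst hlt hgst⟩
  have loops_nonempty : loops.Nonempty := by
    contrapose! hinj
    intro s hs t ht hgst
    by_contra hne
    wlog hst : s < t generalizing s t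
    · exact this ht hs hgst.symm (Ne.symm hne) ((Ne.symm hne).lt_of_le (not_lt.1 hst))
    · exact notMem_empty _ (hinj ▸ mem_loops s hs t ht hst hgst)
  obtain ⟨⟨u, v⟩, ⟨⟨⟨hu, hv⟩, hguv⟩, huv⟩, hmin⟩ :=
    isCompact_loops.exists_isMinOn loops_nonempty (f := fun p : ℝ × ℝ => p.2 - p.1) (by fun_prop)
  refine ⟨u, hu, v, hv, (lt_add_of_pos_right u hδ).trans_le huv, hguv, ?_⟩
  have subset : Ioc u v ⊆ Icc a b := Ioc_subset_Icc_self.trans (Icc_subset_Icc hu.1 hv.2)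
  intro s hs t ht hgst
  by_contra hne
  wlog hst : s < t generalizing s t
  · exact this ht hs hgst.symm (Ne.symm hne) ((Ne.symm hne).lt_of_le (not_lt.1 hst))
  have hle : v - u ≤ t - s := hmin (mem_loops s (subset hs) t (subset ht) hst hgst)
  linarith [hs.1, ht.2]

theorem injOn_Icc_of_locally_injOn (hg : ContinuousOn g (Icc a b))
    (hloc : ∀ t ∈ Icc a b, ∃ V ∈ 𝓝[Icc a b] t, InjOn g V) : InjOn g (Icc a b) := by
  by_contra hinj
  obtain ⟨u, hu, v, hv, huv, hguv, hinj_uv⟩ := exists_loop_injOn_Ioc hg hloc hinj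
  exact ne_of_injOn_Ioc huv (hg.mono (Icc_subset_Icc hu.1 hv.2)) hinj_uv hguv

end LocallyInjectivePaths

/-- A finite topological tree. Finiteness is expressed by the finiteness of the set of endpoints
and of the set of arms at each point. -/
class IsFiniteTree (X : Type*) [TopologicalSpace X] : Prop extends
    CompactSpace X, T2Space X, UniquelyArcConnected X where
  finite_arms : ∀ x : X, (arms x).Finite
  finite_endpoints : {x : X | IsEndpoint x}.Finite

section FiniteTrees

variable {X : Type*} [TopologicalSpace X] [IsFiniteTree X] {b p x y z : X}

theorem sInter_compl_armTo_nonempty {c : Set (Set X)} (hne : c.Nonempty)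
    (hchain : IsChain (· ⊆ ·) c) (hc : ∀ U ∈ c, ∃ y, (armTo y b)ᶜ = U) : (⋂₀ c).Nonempty := by
  have : Nonempty c := hne.to_subtype
  have isClosed_of_mem : ∀ U ∈ c, IsClosed U := by
    intro U hU
    obtain ⟨y, rfl⟩ := hc U hU
    exact (isOpen_armTo (IsFiniteTree.finite_arms y) b).isClosed_compl
  have directed : DirectedOn (· ⊇ ·) c := fun U hU V hV =>
    (hchain.total hU hV).elim (fun h => ⟨U, hU, subset_rfl, h⟩) (fun h => ⟨V, hV, h, subset_rfl⟩)
  refine IsCompact.nonempty_sInter_of_directed_nonempty_isCompact_isClosed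
    directed ?_ (fun U hU => (isClosed_of_mem U hU).isCompact) isClosed_of_mem
  intro U hU
  obtain ⟨y, rfl⟩ := hc U hU
  exact ⟨y, notMem_armTo y b⟩

/- Zorn's lemma gives a point of the shadow whose own shadow is minimal; it is an endpoint because
otherwise its shadow would contain a point with a strictly smaller shadow. -/
theorem exists_isEndpoint_mem_shadow (hne : (shadow b z).Nonempty) :
    ∃ e ∈ shadow b z, IsEndpoint e := by
  obtain ⟨y₀, hy₀⟩ := hne
  obtain ⟨_, -, ⟨y, hy, rfl⟩, hmin⟩ :=
    zorn_superset_nonempty ((fun y => (armTo y b)ᶜ) '' shadow b z) (by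
      intro c hc hchain hcne
      obtain ⟨p, hp⟩ := sInter_compl_armTo_nonempty hcne hchain
        fun U hU => (hc hU).imp fun _ h => h.2
      have hpz : p ∈ shadow b z := by
        obtain ⟨U, hU⟩ := hcne
        obtain ⟨y, hy, rfl⟩ := hc hU
        exact mem_shadow_of_notMem_armTo hy (hp _ hU)
      refine ⟨_, ⟨p, hpz, rfl⟩, fun U hU => ?_⟩
      obtain ⟨y, -, rfl⟩ := hc hU
      exact compl_subset_compl.2 (armTo_subset_armTo (hp _ hU)))
    _ ⟨y₀, hy₀, rfl⟩
  refine ⟨y, hy, by_contra fun hend => ?_⟩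
  have hby : b ≠ y := fun h => base_notMem_shadow b z (h ▸ hy)
  obtain ⟨q, hq⟩ := shadow_nonempty hby hend
  have hge : (armTo y b)ᶜ ⊆ (armTo q b)ᶜ :=
    hmin ⟨q, shadow_subset_shadow hy hq, rfl⟩ (compl_subset_compl.2 (armTo_subset_armTo hq.2))
  exact hge (notMem_armTo y b) (insert_armTo_subset_armTo hq (mem_insert _ _))

theorem exists_isEndpoint_mem_arcBetween (h : b ≠ z) :
    ∃ e, IsEndpoint e ∧ z ∈ arcBetween b e := by
  by_cases hz : IsEndpoint z
  · exact ⟨z, hz, right_mem_arcBetween b z⟩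
  · obtain ⟨e, he, hend⟩ := exists_isEndpoint_mem_shadow (shadow_nonempty h hz)
    exact ⟨e, hend, mem_arcBetween_of_mem_shadow he⟩

/- The set is the union of `{z}` and the finitely many arcs from `z` to the endpoints in `Q`. -/
theorem isClosed_insert_of_forall_mem_arcBetween {Q : Set X}
    (hQ : ∀ e, ∀ r ∈ arcBetween z e, r ≠ z → (r ∈ Q ↔ e ∈ Q)) : IsClosed (insert z Q) := by
  have eq_union : insert z Q = {z} ∪ ⋃ e ∈ {e | IsEndpoint e} ∩ Q, arcBetween z e := by
    ext r
    simp only [mem_insert_iff, mem_union, mem_singleton_iff, mem_iUnion]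
    rcases eq_or_ne r z with rfl | hrz
    · simp only [true_or]
    simp only [hrz, false_or]
    constructor
    · intro hr
      obtain ⟨e, he, hre⟩ := exists_isEndpoint_mem_arcBetween hrz.symm
      exact ⟨e, ⟨he, (hQ e r hre hrz).1 hr⟩, hre⟩
    · rintro ⟨e, ⟨-, heQ⟩, hre⟩
      exact (hQ e r hre hrz).2 heQ
  rw [eq_union]
  exact isClosed_singleton.union
    ((IsFiniteTree.finite_endpoints.subset inter_subset_left).isClosed_biUnion
      fun e _ => (isCompact_arcBetween z e).isClosed)

theorem exists_ne_mem_arcBetween_of_mem_armTo (hy : y ∈ armTo z x) :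
    ∃ w ≠ z, w ∈ arcBetween z x ∧ w ∈ arcBetween z y := by
  -- The points that leave `z` in the same direction as `x`.
  let G : Set X := {q | ∃ w ≠ z, w ∈ arcBetween z x ∧ w ∈ arcBetween z q}
  have mem_G_iff : ∀ e, ∀ r ∈ arcBetween z e, r ≠ z → (r ∈ G ↔ e ∈ G) := by
    refine fun e r hr hrz => ⟨?_, ?_⟩
    · rintro ⟨w, hwz, hwx, hwr⟩
      exact ⟨w, hwz, hwx, arcBetween_subset_arcBetween hr hwr⟩
    · rintro ⟨w, hwz, hwx, hwe⟩
      rcases mem_arcBetween_total hwe hr with hwr | hrw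
      · exact ⟨w, hwz, hwx, hwr⟩
      · exact ⟨r, hrz, arcBetween_subset_arcBetween hwx hrw, right_mem_arcBetween z r⟩
  have z_notMem_G : z ∉ G := by
    rintro ⟨w, hwz, -, hw⟩
    rw [arcBetween_self] at hw
    exact hwz hw
  have isOpen_G : IsOpen G := by
    rw [← isClosed_compl_iff, ← insert_eq_of_mem (mem_compl z_notMem_G)]
    exact isClosed_insert_of_forall_mem_arcBetween fun e r hr hrz =>
      not_congr (mem_G_iff e r hr hrz)
  have closure_subset : closure G ⊆ insert z G :=
    closure_minimal (subset_insert _ _) (isClosed_insert_of_forall_mem_arcBetween mem_G_iff)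
  have hxz : x ≠ z := connectedComponentIn_nonempty_iff.1 ⟨y, hy⟩
  refine (isPreconnected_armTo z x).subset_of_closure_inter_subset isOpen_G
    ⟨x, mem_armTo_self hxz, x, hxz, right_mem_arcBetween z x, right_mem_arcBetween z x⟩ ?_ hy
  rintro q ⟨hq, hqx⟩
  exact (closure_subset hq).resolve_left fun h => notMem_armTo z x (h ▸ hqx)

theorem mem_shadow_iff_mem_arcBetween : x ∈ shadow b z ↔ z ∈ arcBetween b x ∧ x ≠ z := by
  refine ⟨fun h => ⟨mem_arcBetween_of_mem_shadow h, h.1⟩, fun ⟨hz, hne⟩ => ⟨hne, fun hx => ?_⟩⟩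
  obtain ⟨w, hwz, hwb, hwx⟩ := exists_ne_mem_arcBetween_of_mem_armTo hx
  exact hwz (arcBetween_inter_arcBetween_subset hz ⟨hwb, hwx⟩)

theorem eq_or_mem_shadow_of_mem_shadow (hx : p ∈ shadow b x) (hy : p ∈ shadow b y) :
    x = y ∨ x ∈ shadow b y ∨ y ∈ shadow b x := by
  refine or_iff_not_imp_left.2 fun hne => ?_
  rcases mem_arcBetween_total (mem_arcBetween_of_mem_shadow hx)
    (mem_arcBetween_of_mem_shadow hy) with h | h
  · exact Or.inr (mem_shadow_iff_mem_arcBetween.2 ⟨h, Ne.symm hne⟩)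
  · exact Or.inl (mem_shadow_iff_mem_arcBetween.2 ⟨h, hne⟩)

theorem exists_least_shadow {s : Set X} (hs : s.Finite) (hne : ∃ w ∈ s, p ∈ shadow b w) :
    ∃ w ∈ s, p ∈ shadow b w ∧ ∀ v ∈ s, p ∈ shadow b v → shadow b w ⊆ shadow b v := by
  obtain ⟨w, ⟨hws, hw⟩, hmin⟩ :=
    (hs.subset (sep_subset s (p ∈ shadow b ·))).exists_minimalFor (shadow b) _ hne
  refine ⟨w, hws, hw, fun v hvs hv => ?_⟩
  rcases eq_or_mem_shadow_of_mem_shadow hw hv with rfl | h | h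
  · exact subset_rfl
  · exact shadow_subset_shadow h
  · exact hmin ⟨hvs, hv⟩ (shadow_subset_shadow h)

end FiniteTrees

section PeriodicOrbits

variable {α : Type*} {f : α → α} {z : α}

theorem finite_range_iterate_of_mem_periodicPts (hz : z ∈ periodicPts f) :
    (range fun k => f^[k] z).Finite := by
  obtain ⟨n, hn, hper⟩ := hz
  refine ((finite_lt_nat n).image fun k => f^[k] z).subset ?_
  rintro _ ⟨k, rfl⟩
  exact ⟨k % n, Nat.mod_lt k hn, hper.iterate_mod_apply k⟩

theorem exists_iterate_iterate_eq_of_mem_periodicPts (hz : z ∈ periodicPts f) (j k : ℕ) :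
    ∃ l, f^[l] (f^[j] z) = f^[k] z := by
  obtain ⟨n, hn, hper⟩ := hz
  obtain ⟨m, hm⟩ := Nat.exists_eq_add_of_le (Nat.le_mul_of_pos_right j hn)
  refine ⟨k + m, ?_⟩
  rw [← iterate_add_apply, add_assoc, add_comm m, ← hm, iterate_add_apply,
    (hper.const_mul j).eq]

end PeriodicOrbits

/-- A continuous map that is locally injective away from the single critical point `c`. -/
structure IsUnicritical {X : Type*} [TopologicalSpace X] (f : X → X) (c : X) : Prop where
  continuous : Continuous f
  exists_injOn_nhds : ∀ x ≠ c, ∃ U ∈ 𝓝 x, InjOn f U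

/-- `w` is the characteristic point of its orbit under `f` with critical point `c`: it separates
the critical value `f c` from `c`, and the rest of the orbit lies on the side of `c`. Since
`armTo c c` is empty, this forces `w ≠ c`. -/
def IsCharacteristicPt {X : Type*} [TopologicalSpace X] (f : X → X) (c w : X) : Prop :=
  f c ∈ shadow c w ∧ ∀ k, f^[k] w ≠ w → f^[k] w ∈ armTo w c

section UnicriticalMaps

variable {X : Type*} [TopologicalSpace X] {f : X → X} {c v w z : X}

theorem IsUnicritical.injOn_arcBetween [T2Space X] [UniquelyArcConnected X]
    (hf : IsUnicritical f c) (x : X) : InjOn f (arcBetween c x) := by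
  obtain ⟨g, b, hb, hg, hinj, rfl, -, hA⟩ :=
    (isArcBetween_arcBetween c x).exists_parametrization
  rw [← hA]
  have continuous_comp : Continuous (f ∘ g) := hf.continuous.comp hg
  refine (injOn_Icc_of_injOn_Ioc hb continuous_comp.continuousOn fun s hs t ht hst => ?_
    : InjOn (f ∘ g) (Icc 0 b)).image_of_comp
  refine injOn_Icc_of_locally_injOn (a := min s t) (b := b) continuous_comp.continuousOn ?_
    ⟨min_le_left s t, hs.2⟩ ⟨min_le_right s t, ht.2⟩ hst
  intro r hr
  have hr0 : 0 < r := (lt_min hs.1 ht.1).trans_le hr.1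
  have hgr : g r ≠ g 0 := fun h => hr0.ne' (hinj ⟨hr0.le, hr.2⟩ ⟨le_rfl, hb⟩ h)
  obtain ⟨U, hU, hUinj⟩ := hf.exists_injOn_nhds (g r) hgr
  have subset : Icc (min s t) b ⊆ Icc 0 b := Icc_subset_Icc_left (lt_min hs.1 ht.1).le
  exact ⟨g ⁻¹' U ∩ Icc (min s t) b,
    Filter.inter_mem (mem_nhdsWithin_of_mem_nhds (hg.continuousAt hU)) self_mem_nhdsWithin,
    hUinj.comp (hinj.mono (inter_subset_right.trans subset)) fun _ h => h.1⟩

variable [IsFiniteTree X]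

theorem IsUnicritical.mapsTo_shadow (hf : IsUnicritical f c) (hz : z ≠ c)
    (hv : f c ∉ shadow c (f z)) : MapsTo f (shadow c z) (shadow c (f z)) := by
  intro x hx
  obtain ⟨hzx, hne⟩ := mem_shadow_iff_mem_arcBetween.1 hx
  have hinj : InjOn f (arcBetween c x) := hf.injOn_arcBetween x
  have hfx : f x ∈ shadow (f c) (f z) := by
    refine mem_shadow_iff_mem_arcBetween.2
      ⟨?_, fun h => hne (hinj (right_mem_arcBetween c x) hzx h)⟩
    rw [← image_arcBetween hf.continuous.continuousOn hinj]
    exact mem_image_of_mem f hzx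
  have hcz : f c ≠ f z := fun h => hz (hinj (left_mem_arcBetween c x) hzx h).symm
  have hside : f c ∈ armTo (f z) c := by
    by_contra h
    exact hv ⟨hcz, h⟩
  rwa [shadow_eq_shadow hside]

theorem IsUnicritical.mapsTo_iterate_shadow (hf : IsUnicritical f c) {q : ℕ}
    (hc : ∀ l < q, f^[l] z ≠ c) (hv : ∀ l < q, f c ∉ shadow c (f^[l + 1] z)) :
    MapsTo f^[q] (shadow c z) (shadow c (f^[q] z)) := by
  induction q with
  | zero => exact mapsTo_id _
  | succ q ih =>
    have step : MapsTo f (shadow c (f^[q] z)) (shadow c (f^[q + 1] z)) := by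
      have hvq := hv q q.lt_succ_self
      rw [iterate_succ_apply'] at hvq ⊢
      exact hf.mapsTo_shadow (hc q q.lt_succ_self) hvq
    intro x hx
    rw [iterate_succ_apply' f q x]
    exact step (ih (fun l hl => hc l (hl.trans q.lt_succ_self))
      (fun l hl => hv l (hl.trans q.lt_succ_self)) hx)

theorem IsUnicritical.exists_critical_value_mem_shadow (hf : IsUnicritical f c)
    (hc : ∀ k, f^[k] z ≠ c) (hz : ¬ IsEndpoint z)
    (hend : ∀ e, IsEndpoint e → ∃ i, f^[i] e ∉ armTo c (f^[i] z)) :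
    ∃ k, f c ∈ shadow c (f^[k] z) := by
  by_contra! hno
  obtain ⟨e, he, hee⟩ := exists_isEndpoint_mem_shadow (shadow_nonempty (hc 0).symm hz)
  obtain ⟨i, hi⟩ := hend e hee
  have hshadow : f^[i] e ∈ shadow c (f^[i] z) :=
    hf.mapsTo_iterate_shadow (fun l _ => hc l) (fun l _ => hno (l + 1)) he
  exact hi (mem_armTo_of_mem_shadow (hc i) hshadow)

theorem IsUnicritical.iterate_notMem_shadow (hf : IsUnicritical f c) (hper : w ∈ periodicPts f)
    (hc : ∀ k, f^[k] w ≠ c) (hw : f c ∈ shadow c w)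
    (hleast : ∀ j, f c ∈ shadow c (f^[j] w) → shadow c w ⊆ shadow c (f^[j] w)) (k : ℕ) :
    f^[k] w ∉ shadow c w := by
  classical
  intro hk
  obtain ⟨j, q, rfl, hj, hlast⟩ : ∃ j q, q + j = k ∧ f c ∈ shadow c (f^[j] w) ∧
      ∀ l < q, f c ∉ shadow c (f^[l + 1] (f^[j] w)) := by
    let P : ℕ → Prop := fun j => f c ∈ shadow c (f^[j] w)
    have hle : Nat.findGreatest P k ≤ k := Nat.findGreatest_le k
    refine ⟨Nat.findGreatest P k, k - Nat.findGreatest P k, Nat.sub_add_cancel hle,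
      Nat.findGreatest_spec (P := P) k.zero_le hw, fun l hl => ?_⟩
    rw [← iterate_add_apply]
    exact Nat.findGreatest_is_greatest (P := P) (n := k) (by omega) (by omega)
  rw [iterate_add_apply] at hk
  have mapsTo_self : MapsTo f^[q] (shadow c (f^[j] w)) (shadow c (f^[j] w)) :=
    (hf.mapsTo_iterate_shadow (fun l _ => by rw [← iterate_add_apply]; exact hc _) hlast).mono_right
      ((shadow_subset_shadow hk).trans (hleast j hj))
  obtain ⟨n, hn, hnper⟩ := hper
  obtain ⟨m, rfl⟩ := Nat.exists_eq_succ_of_ne_zero hn.ne'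
  have hreturn : (f^[q])^[m] (f^[q] (f^[j] w)) = f^[j] w :=
    ((hnper.apply_iterate j).iterate q).eq
  have hmem := mapsTo_self.iterate m (hleast j hj hk)
  rw [hreturn] at hmem
  exact notMem_shadow_self c _ hmem

theorem IsCharacteristicPt.eq_of_iterate_eq (hv : IsCharacteristicPt f c v)
    (hw : IsCharacteristicPt f c w) (hvw : ∃ k, f^[k] v = w) (hwv : ∃ k, f^[k] w = v) :
    v = w := by
  by_contra hne
  obtain ⟨k, hk⟩ := hvw
  obtain ⟨l, hl⟩ := hwv
  have hvw : v ∈ armTo w c := hl ▸ hw.2 l (hl.trans_ne hne)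
  have hwv : w ∈ armTo v c := hk ▸ hv.2 k (hk.trans_ne (Ne.symm hne))
  rcases eq_or_mem_shadow_of_mem_shadow hv.1 hw.1 with h | h | h
  · exact hne h
  · exact h.2 hvw
  · exact h.2 hwv

theorem exists_unique_characteristic_point_general (hf : IsUnicritical f c)
    (hper : z ∈ periodicPts f) (hc : ∀ k, f^[k] z ≠ c) (hz : ¬ IsEndpoint z)
    (hend : ∀ e, IsEndpoint e → ∃ i, f^[i] e ∉ armTo c (f^[i] z)) :
    ∃! w, (∃ k, f^[k] z = w) ∧ IsCharacteristicPt f c w := by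
  obtain ⟨j, hj⟩ := hf.exists_critical_value_mem_shadow hc hz hend
  obtain ⟨_, ⟨i, rfl⟩, hi, hleast⟩ :=
    exists_least_shadow (finite_range_iterate_of_mem_periodicPts hper) ⟨_, ⟨j, rfl⟩, hj⟩
  have no_return : ∀ k, f^[k] (f^[i] z) ∉ shadow c (f^[i] z) := by
    refine hf.iterate_notMem_shadow (hper.imp fun n hn => ⟨hn.1, hn.2.apply_iterate i⟩) ?_ hi ?_
    · exact fun k => iterate_add_apply f k i z ▸ hc (k + i)
    · exact fun k => hleast _ ⟨k + i, iterate_add_apply f k i z⟩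
  have characteristic : IsCharacteristicPt f c (f^[i] z) :=
    ⟨hi, fun k hne => by_contra fun h => no_return k ⟨hne, h⟩⟩
  refine ⟨f^[i] z, ⟨⟨i, rfl⟩, characteristic⟩, ?_⟩
  rintro _ ⟨⟨k, rfl⟩, hk⟩
  exact hk.eq_of_iterate_eq characteristic
    (exists_iterate_iterate_eq_of_mem_periodicPts hper k i)
    (exists_iterate_iterate_eq_of_mem_periodicPts hper i k)

end UnicriticalMaps

namespace HubbardTree

variable {X : Type*} [TopologicalSpace X]

theorem isFiniteTree (H : HubbardTree X) : IsFiniteTree X :=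
  { H.compact, H.t2 with
    existsUnique_isArcBetween := fun x y => ⟨H.arc x y, H.arc_isArc x y, H.arc_unique x y⟩
    finite_arms := H.arms_finite
    finite_endpoints := H.endpoint_finite }

variable (H : HubbardTree X) {w x y z : X}

theorem isUnicritical : IsUnicritical H.f H.c0 where
  continuous := H.cont
  exists_injOn_nhds := by
    intro x hx
    obtain ⟨U, hU, hxU, hemb⟩ := H.local_homeo x hx
    exact ⟨U, hU.mem_nhds hxU, injOn_iff_injective.2 hemb.injective⟩

theorem isCharacteristic_iff : H.IsCharacteristic w ↔ IsCharacteristicPt H.f H.c0 w := by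
  constructor
  · rintro ⟨Cv, Cz, hCv, hCz, hne, hv, hz, horbit⟩
    obtain rfl := eq_armTo_of_mem_arms hCv hv
    obtain rfl := eq_armTo_of_mem_arms hCz hz
    exact ⟨⟨fun h => notMem_armTo w H.c1 (h ▸ hv), fun h => hne (armTo_eq_armTo h).symm⟩, horbit⟩
  · rintro ⟨hv, horbit⟩
    have hw : H.c0 ≠ w := by
      rintro rfl
      exact hv.2 (horbit 1 H.crit_not_fixed)
    refine ⟨armTo w H.c1, armTo w H.c0, armTo_mem_arms hv.1, armTo_mem_arms hw, fun h => ?_,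
      mem_armTo_self hv.1, mem_armTo_self hw, horbit⟩
    exact hv.2 (h ▸ mem_armTo_self hv.1)

theorem iterate_ne_c0 (hnoend : ∀ k, ¬ IsEndpoint (H.f^[k] z)) (k : ℕ) : H.f^[k] z ≠ H.c0 := by
  intro hk
  have := H.isFiniteTree
  obtain ⟨e, he, -⟩ := exists_isEndpoint_mem_arcBetween H.crit_not_fixed
  obtain ⟨m, rfl⟩ := H.endpoints_on_orbit e he
  rw [← hk, ← iterate_add_apply] at he
  exact hnoend (m + k) he

theorem symOf_eq_of_mem_armTo (h : y ∈ armTo H.c0 x) : H.symOf y = H.symOf x := by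
  have hx : x ≠ H.c0 := connectedComponentIn_nonempty_iff.1 ⟨y, h⟩
  have hy : y ≠ H.c0 := fun hy => notMem_armTo H.c0 x (hy ▸ h)
  have mem_T1_iff : y ∈ H.T1 ↔ x ∈ H.T1 := by
    change y ∈ armTo H.c0 H.c1 ↔ x ∈ armTo H.c0 H.c1
    rw [mem_armTo_comm, mem_armTo_comm (y := x), armTo_eq_armTo h]
  rw [symOf, symOf, if_neg hx, if_neg hy]
  classical exact if_congr mem_T1_iff rfl rfl

theorem exists_iterate_notMem_armTo (hpre : (¬ ∃ p : ℕ, 1 ≤ p ∧ H.f^[p] H.c0 = H.c0) →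
      ∀ x : X, IsEndpoint x → ∃ i : ℕ, H.itin z i ≠ H.itin x i)
    (hx : IsEndpoint x) : ∃ i, H.f^[i] x ∉ armTo H.c0 (H.f^[i] z) := by
  by_cases hp : ∃ p : ℕ, 1 ≤ p ∧ H.f^[p] H.c0 = H.c0
  · obtain ⟨p, hp1, hp2⟩ := hp
    obtain ⟨m, rfl⟩ := H.endpoints_on_orbit x hx
    obtain ⟨l, hl⟩ :=
      exists_iterate_iterate_eq_of_mem_periodicPts (mk_mem_periodicPts hp1 hp2) m 0
    exact ⟨l, hl.symm ▸ notMem_armTo _ _⟩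
  · obtain ⟨i, hi⟩ := hpre hp x hx
    exact ⟨i - 1, fun h => hi (H.symOf_eq_of_mem_armTo h).symm⟩

end HubbardTree

/-- Lemma 3.1, "Characteristic Point".
Every periodic orbit containing no endpoint of the tree (whose itineraries differ
from the itineraries of all endpoints, in case the critical orbit is preperiodic)
has a unique characteristic point: a point `z` of the orbit such that the critical
value lies in one component of `T \ {z}` and the critical point together with all
other orbit points lie in a different component. -/
theorem exists_unique_characteristic_point
    {X : Type*} [TopologicalSpace X] (H : HubbardTree X) (z : X) (n : ℕ)
    (hn : 1 ≤ n) (hper : H.f^[n] z = z)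
    (hnoend : ∀ k : ℕ, ¬ IsEndpoint (H.f^[k] z))
    (hpre : (¬ ∃ p : ℕ, 1 ≤ p ∧ H.f^[p] H.c0 = H.c0) →
      ∀ k : ℕ, ∀ x : X, IsEndpoint x →
        ∃ i : ℕ, 1 ≤ i ∧ H.itin (H.f^[k] z) i ≠ H.itin x i) :
    ∃! w : X, (∃ k : ℕ, H.f^[k] z = w) ∧ H.IsCharacteristic w := by
  have := H.isFiniteTree
  simpa only [H.isCharacteristic_iff] using exists_unique_characteristic_point_general
    H.isUnicritical (mk_mem_periodicPts hn hper) (H.iterate_ne_c0 hnoend) (hnoend 0)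
    fun _ => H.exists_iterate_notMem_armTo fun hp x hx => (hpre hp 0 x hx).imp fun _ => And.right

end HubbardTrees
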